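/- Let S and T be valid configurations of n ≥ 1 points each in ℝ², and let r_S, r_T ≥ 0 be such that S ⊆ closedBall(0, r_S) and T ⊆ closedBall(0, r_T). Then there exists a translation v ∈ ℝ² with ‖v‖ ≤ (r_S + r_T + 2)·(1 + 8n) such that the unlabeled reconfiguration problem from S to T + v is feasible. -/

import Mathlib

open Metric

abbrev Pt : Type := EuclideanSpace ℝ (Fin 2)

/-- The ordered sequence of matched pairs `(s i, t i)` is a valid itinerary for
translation `v`: the unit disc moved at step `i` from `s i` to `t i + v` never
overlaps the interior of a still-unmoved disc or an already-placed disc. -/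
def ValidItinerary {n : ℕ} (s t : Fin n → Pt) (v : Pt) : Prop :=
  ∀ i : Fin n, ∀ x ∈ segment ℝ (s i) (t i + v),
    (∀ j : Fin n, i < j → 2 ≤ dist x (s j)) ∧
    (∀ j : Fin n, j < i → 2 ≤ dist x (t j + v))

/-- The unlabeled reconfiguration problem from `S` to `T'` is feasible: there are
enumerations of `S` and `T'` forming a valid itinerary for translation `0`. -/
def Feasible (n : ℕ) (S T' : Set Pt) : Prop :=
  ∃ s t : Fin n → Pt,
    Function.Injective s ∧ Function.Injective t ∧
    Set.range s = S ∧ Set.range t = T' ∧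
    ValidItinerary s t 0

/-- Squared-norm version of the clearance estimate for one move. -/
lemma key_ineq (d u z : Pt) (D ρ a : ℝ) (hu : ‖u‖ = 1) (hρ : 0 ≤ ρ) (hD : 9 * ρ ≤ D)
    (ha : 0 ≤ a) (hd : 2 ≤ ‖d‖) (hdu : 0 ≤ inner ℝ d u) (hz : ‖z‖ ≤ ρ)
    (hgood : ‖d‖ ^ 2 ≤ 4.1 → ρ * ‖d‖ ≤ D * inner ℝ d u) :
    2 ≤ ‖d + a • (D • u + z)‖ := by
  have h1 : ‖d + a • (D • u + z)‖ ^ 2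
      = ‖d‖ ^ 2 + 2 * (a * inner ℝ d (D • u + z)) + a ^ 2 * ‖D • u + z‖ ^ 2 := by
    rw [norm_add_sq_real, inner_smul_right, norm_smul, mul_pow, Real.norm_eq_abs, sq_abs]
  have h2 : inner ℝ d (D • u + z) = D * inner ℝ d u + inner ℝ d z := by
    rw [inner_add_right, inner_smul_right]
  have h3 : -(‖d‖ * ρ) ≤ inner ℝ d z := by
    have := abs_real_inner_le_norm d z
    have h4 : ‖d‖ * ‖z‖ ≤ ‖d‖ * ρ := by gcongr
    have := (abs_le.1 this).1
    linarith
  have hw : 8 * ρ ≤ ‖D • u + z‖ := by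
    have h5 : ‖D • u‖ ≤ ‖D • u + z‖ + ‖z‖ := by
      have := norm_sub_le (D • u + z) z
      simpa using this
    rw [norm_smul, hu, mul_one, Real.norm_eq_abs] at h5
    have := le_abs_self D
    linarith
  have hw2 : (8 * ρ) ^ 2 ≤ ‖D • u + z‖ ^ 2 := by gcongr
  have hfin : (2:ℝ) ^ 2 ≤ ‖d + a • (D • u + z)‖ ^ 2 := by
    rw [h1]
    have ha2 : a ^ 2 * (8 * ρ) ^ 2 ≤ a ^ 2 * ‖D • u + z‖ ^ 2 := by gcongr
    by_cases hc : ‖d‖ ^ 2 ≤ 4.1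
    · have hg := hgood hc
      have : 0 ≤ inner ℝ d (D • u + z) := by rw [h2]; linarith
      have : 0 ≤ a * inner ℝ d (D • u + z) := mul_nonneg ha this
      nlinarith [sq_nonneg (a * ‖D • u + z‖)]
    · have hD0 : 0 ≤ D := by linarith
      have : -(‖d‖ * ρ) ≤ inner ℝ d (D • u + z) := by
        rw [h2]; have := mul_nonneg hD0 hdu; linarith
      have := mul_le_mul_of_nonneg_left this ha
      push Not at hc
      nlinarith [sq_nonneg (8 * a * ρ - ‖d‖ / 8)]
  exact le_of_sq_le_sq hfin (norm_nonneg _)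

/-- Two vectors in the same octant of the thin annulus are at distance less than `2`. -/
lemma octant_aux (x y x' y' : ℝ) (hx : 0 ≤ x) (hx' : 0 ≤ x') (hy : 0 ≤ y) (hy' : 0 ≤ y')
    (h : y ≤ x) (h' : y' ≤ x') (h1 : 4 ≤ x ^ 2 + y ^ 2) (h2 : x ^ 2 + y ^ 2 ≤ 4.1)
    (h1' : 4 ≤ x' ^ 2 + y' ^ 2) (h2' : x' ^ 2 + y' ^ 2 ≤ 4.1) :
    (x - x') ^ 2 + (y - y') ^ 2 < 4 := by
  have a1 : 1.4 ≤ x := by nlinarith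
  have a1' : 1.4 ≤ x' := by nlinarith
  have a2 : x ≤ 2.1 := by nlinarith
  have a2' : x' ≤ 2.1 := by nlinarith
  have a3 : y ≤ 1.5 := by nlinarith
  have a3' : y' ≤ 1.5 := by nlinarith
  have b1 : (x - x') ^ 2 ≤ 0.7 ^ 2 := by
    apply sq_le_sq'  <;> linarith
  have b2 : (y - y') ^ 2 ≤ 1.5 ^ 2 := by
    apply sq_le_sq'  <;> linarith
  norm_num at b1 b2
  linarith

lemma octant (x y x' y' : ℝ) (hy : 0 ≤ y) (hy' : 0 ≤ y')
    (hs : (0 ≤ x ↔ 0 ≤ x')) (h : (|x| ≤ y ↔ |x'| ≤ y')) (h1 : 4 ≤ x ^ 2 + y ^ 2)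
    (h2 : x ^ 2 + y ^ 2 ≤ 4.1)
    (h1' : 4 ≤ x' ^ 2 + y' ^ 2) (h2' : x' ^ 2 + y' ^ 2 ≤ 4.1) :
    (x - x') ^ 2 + (y - y') ^ 2 < 4 := by
  have e : (x - x') ^ 2 = (|x| - |x'|) ^ 2 := by
    by_cases hx : 0 ≤ x
    · rw [abs_of_nonneg hx, abs_of_nonneg (hs.1 hx)]
    · have hx' : ¬ 0 ≤ x' := fun q => hx (hs.2 q)
      push Not at hx hx'
      rw [abs_of_neg hx, abs_of_neg hx']; ring
  rw [e]
  rw [← sq_abs x] at h1 h2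
  rw [← sq_abs x'] at h1' h2'
  by_cases hc : |x| ≤ y
  · have := octant_aux y |x| y' |x'| hy hy' (abs_nonneg _) (abs_nonneg _) hc (h.1 hc)
      (by linarith) (by linarith) (by linarith) (by linarith)
    linarith
  · have hc' : ¬ |x'| ≤ y' := fun q => hc (h.2 q)
    push Not at hc hc'
    have := octant_aux |x| y |x'| y' (abs_nonneg _) (abs_nonneg _) hy hy' hc.le hc'.le h1 h2 h1' h2'
    exact this

/-- The direction at angle `θ`. -/
noncomputable def dirv (θ : ℝ) : Pt := !₂[Real.cos θ, Real.sin θ]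

lemma norm_dirv (θ : ℝ) : ‖dirv θ‖ = 1 := by
  rw [EuclideanSpace.norm_eq]
  simp [dirv, Fin.sum_univ_two]

lemma inner_dirv (d : Pt) (θ : ℝ) :
    inner ℝ d (dirv θ) = d 0 * Real.cos θ + d 1 * Real.sin θ := by
  simp [dirv, PiLp.inner_apply, Fin.sum_univ_two, mul_comm]

lemma normsq_pt (d : Pt) : ‖d‖ ^ 2 = d 0 ^ 2 + d 1 ^ 2 := by
  rw [EuclideanSpace.real_norm_sq_eq]
  simp [Fin.sum_univ_two]

lemma sin_lower (N m : ℕ) (hm : 1 ≤ m) (hmN : m < N) :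
    2 / (N : ℝ) ≤ Real.sin (m * (Real.pi / N)) := by
  have hN : (0 : ℝ) < N := by exact_mod_cast (by omega : 0 < N)
  have hpi := Real.pi_pos
  have hm1 : (1 : ℝ) ≤ m := by exact_mod_cast hm
  have hm2 : (m : ℝ) + 1 ≤ N := by exact_mod_cast hmN
  by_cases hc : m * (Real.pi / N) ≤ Real.pi / 2
  · have := Real.mul_le_sin (by positivity) hc
    refine le_trans ?_ this
    have e : 2 / Real.pi * (m * (Real.pi / N)) = m * (2 / N) := by field_simp
    rw [e]
    have : 0 < 2 / (N : ℝ) := by positivity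
    nlinarith
  · push Not at hc
    have e0 : Real.pi - m * (Real.pi / N) = (N - m) * (Real.pi / N) := by field_simp
    have := Real.mul_le_sin (x := Real.pi - m * (Real.pi / N))
      (by rw [e0]; exact mul_nonneg (by linarith) (by positivity)) (by linarith)
    rw [Real.sin_pi_sub] at this
    refine le_trans ?_ this
    have e : 2 / Real.pi * (Real.pi - m * (Real.pi / N)) = (N - m) * (2 / N) := by
      rw [e0]; field_simp
    rw [e]
    have : 0 < 2 / (N : ℝ) := by positivity
    nlinarith

lemma sin_lower' (N : ℕ) (k l : Fin N) (h : k ≠ l) :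
    2 / (N : ℝ) ≤ |Real.sin ((k : ℕ) * (Real.pi / N) - (l : ℕ) * (Real.pi / N))| := by
  wlog hlt : l < k generalizing k l with H
  · have := H l k h.symm (lt_of_le_of_ne (not_lt.1 hlt) h)
    rw [← abs_neg, ← Real.sin_neg]
    simpa using this
  · have hlt' : (l : ℕ) < k := hlt
    have := sin_lower N (k - l) (by omega) (by omega)
    rw [Nat.cast_sub hlt'.le, sub_mul] at this
    exact this.trans (le_abs_self _)

/-- A nonzero difference vector cannot be almost orthogonal to two well separated directions. -/
lemma two_dirs (d : Pt) (D ρ : ℝ) (hd : d ≠ 0) (hD : 0 < D) (α β : ℝ)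
    (h1 : D * |inner ℝ d (dirv α)| < ρ * ‖d‖) (h2 : D * |inner ℝ d (dirv β)| < ρ * ‖d‖) :
    D * |Real.sin (α - β)| < 2 * ρ := by
  have hd0 : 0 < ‖d‖ := norm_pos_iff.2 hd
  let e : Pt := !₂[-d 1, d 0]
  have he : ‖e‖ = ‖d‖ := by
    have : ‖e‖ ^ 2 = ‖d‖ ^ 2 := by
      rw [normsq_pt, normsq_pt]; simp [e]; ring
    exact (sq_eq_sq₀ (norm_nonneg _) (norm_nonneg _)).1 this
  have hid : ‖d‖ ^ 2 * Real.sin (α - β)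
      = inner ℝ e (dirv α) * inner ℝ d (dirv β) - inner ℝ d (dirv α) * inner ℝ e (dirv β) := by
    rw [normsq_pt, inner_dirv, inner_dirv, inner_dirv, inner_dirv, Real.sin_sub]
    simp [e]; ring
  have ha := abs_real_inner_le_norm e (dirv α)
  have hb := abs_real_inner_le_norm e (dirv β)
  rw [norm_dirv, mul_one, he] at ha hb
  have hab : ‖d‖ ^ 2 * |Real.sin (α - β)|
      ≤ ‖d‖ * |inner ℝ d (dirv β)| + |inner ℝ d (dirv α)| * ‖d‖ := by
    have : ‖d‖ ^ 2 * |Real.sin (α - β)| = |‖d‖ ^ 2 * Real.sin (α - β)| := by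
      rw [abs_mul, abs_of_nonneg (sq_nonneg ‖d‖)]
    rw [this, hid]
    refine (abs_sub _ _).trans ?_
    rw [abs_mul, abs_mul]
    gcongr
  have h3 : D * (‖d‖ ^ 2 * |Real.sin (α - β)|) < ‖d‖ * (ρ * ‖d‖) + (ρ * ‖d‖) * ‖d‖ := by
    calc _ ≤ D * (‖d‖ * |inner ℝ d (dirv β)| + |inner ℝ d (dirv α)| * ‖d‖) := by gcongr
      _ = ‖d‖ * (D * |inner ℝ d (dirv β)|) + (D * |inner ℝ d (dirv α)|) * ‖d‖ := by ring
      _ < _ := by gcongr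
  have : ‖d‖ ^ 2 * (D * |Real.sin (α - β)|) < ‖d‖ ^ 2 * (2 * ρ) := by linarith
  exact lt_of_mul_lt_mul_left this (by positivity)

/-- `(p, q)` is a close pair of `A` whose difference is almost orthogonal to direction `θ`. -/
def BadPair (D ρ θ : ℝ) (p q : Pt) : Prop :=
  p ≠ q ∧ ‖q - p‖ ^ 2 ≤ 4.1 ∧ D * |inner ℝ (q - p) (dirv θ)| < ρ * ‖q - p‖

lemma BadPair.symm {D ρ θ : ℝ} {p q : Pt} (h : BadPair D ρ θ p q) : BadPair D ρ θ q p := by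
  obtain ⟨h1, h2, h3⟩ := h
  refine ⟨h1.symm, by rwa [norm_sub_rev], ?_⟩
  rw [norm_sub_rev, ← neg_sub, inner_neg_left, abs_neg]
  exact h3

lemma BadPair.up {A : Finset Pt} {D ρ θ : ℝ}
    (h : ∃ p ∈ A, ∃ q ∈ A, BadPair D ρ θ p q) :
    ∃ p ∈ A, ∃ q ∈ A, BadPair D ρ θ p q ∧ 0 ≤ (q - p) 1 := by
  obtain ⟨p, hp, q, hq, h⟩ := h
  by_cases hc : 0 ≤ (q - p) 1
  · exact ⟨p, hp, q, hq, h, hc⟩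
  · refine ⟨q, hq, p, hp, h.symm, ?_⟩
    simp at hc ⊢
    linarith

lemma same_oct {A : Finset Pt} (hA : ∀ p ∈ A, ∀ q ∈ A, p ≠ q → 2 ≤ dist p q)
    {D ρ θ θ' : ℝ} {p q q' : Pt} (hp : p ∈ A) (hq : q ∈ A) (hq' : q' ∈ A)
    (h : BadPair D ρ θ p q) (h' : BadPair D ρ θ' p q')
    (hy : 0 ≤ (q - p) 1) (hy' : 0 ≤ (q' - p) 1)
    (o1 : (0 ≤ (q - p) 0 ↔ 0 ≤ (q' - p) 0))
    (o2 : (|(q - p) 0| ≤ (q - p) 1 ↔ |(q' - p) 0| ≤ (q' - p) 1)) : q = q' := by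
  by_contra hne
  have l : ∀ r s : Pt, r ∈ A → s ∈ A → r ≠ s → 4 ≤ ‖r - s‖ ^ 2 := by
    intro r s hr hs hrs
    have := hA r hr s hs hrs
    rw [dist_eq_norm] at this
    nlinarith
  have l1 := l q p hq hp h.1.symm
  have l2 := l q' p hq' hp h'.1.symm
  have l3 := l q q' hq hq' hne
  have m1 := h.2.1
  have m2 := h'.2.1
  have e : q - q' = (q - p) - (q' - p) := by abel
  rw [e, normsq_pt] at l3
  rw [normsq_pt] at l1 l2 m1 m2
  have := octant _ _ _ _ hy hy' o1 o2 l1 m1 l2 m2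
  exact absurd l3 (not_le.2 this)

lemma exists_dir (n : ℕ) (S T : Finset Pt)
    (hSn : S.card = n) (hTn : T.card = n)
    (hS : ∀ p ∈ S, ∀ q ∈ S, p ≠ q → 2 ≤ dist p q)
    (hT : ∀ p ∈ T, ∀ q ∈ T, p ≠ q → 2 ≤ dist p q)
    (D ρ : ℝ) (hD : 0 < D) (hρD : ρ * (8 * n + 1) ≤ D) :
    ∃ θ : ℝ, (¬ ∃ p ∈ S, ∃ q ∈ S, BadPair D ρ θ p q) ∧
      (¬ ∃ p ∈ T, ∃ q ∈ T, BadPair D ρ θ p q) := by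
  classical
  by_contra hcon
  push Not at hcon
  let N := 8 * n + 1
  let ang : Fin N → ℝ := fun k => (k : ℕ) * (Real.pi / N)
  -- the code of a bad direction
  let P : Fin N → (↥S ⊕ ↥T) → Pt → Prop := fun k c q => match c with
    | .inl p => q ∈ S ∧ BadPair D ρ (ang k) p q ∧ 0 ≤ (q - (p : Pt)) 1
    | .inr p => q ∈ T ∧ BadPair D ρ (ang k) p q ∧ 0 ≤ (q - (p : Pt)) 1
  have hP : ∀ k, ∃ c q, P k c q := by
    intro k
    by_cases hk : ∃ p ∈ S, ∃ q ∈ S, BadPair D ρ (ang k) p q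
    · obtain ⟨p, hp, q, hq, h⟩ := BadPair.up hk
      exact ⟨.inl ⟨p, hp⟩, q, hq, h⟩
    · push Not at hk
      obtain ⟨p, hp, q, hq, h⟩ := BadPair.up (hcon (ang k) hk)
      exact ⟨.inr ⟨p, hp⟩, q, hq, h⟩
  choose c q hcq using hP
  let pt : (↥S ⊕ ↥T) → Pt := fun c => match c with
    | .inl p => p
    | .inr p => p
  let f : Fin N → (↥S ⊕ ↥T) × Bool × Bool := fun k =>
    (c k, decide (0 ≤ (q k - pt (c k)) 0), decide (|(q k - pt (c k)) 0| ≤ (q k - pt (c k)) 1))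
  have hcard : Fintype.card ((↥S ⊕ ↥T) × Bool × Bool) < Fintype.card (Fin N) := by
    simp [hSn, hTn, N]; omega
  obtain ⟨k, l, hkl, hf⟩ := Fintype.exists_ne_map_eq_of_card_lt f hcard
  simp only [f, Prod.mk.injEq, decide_eq_decide] at hf
  obtain ⟨hc, o1, o2⟩ := hf
  have hk := hcq k
  have hl := hcq l
  rw [← hc] at hl o1 o2
  have key : ∃ p : Pt, BadPair D ρ (ang k) p (q k) ∧ BadPair D ρ (ang l) p (q k) := by
    generalize c k = ck at hk hl o1 o2
    rcases ck with p | p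
    · have : q k = q l := same_oct hS p.2 hk.1 hl.1 hk.2.1 hl.2.1 hk.2.2 hl.2.2 o1 o2
      exact ⟨p, hk.2.1, this ▸ hl.2.1⟩
    · have : q k = q l := same_oct hT p.2 hk.1 hl.1 hk.2.1 hl.2.1 hk.2.2 hl.2.2 o1 o2
      exact ⟨p, hk.2.1, this ▸ hl.2.1⟩
  obtain ⟨p, b1, b2⟩ := key
  have h1 := two_dirs (q k - p) D ρ (sub_ne_zero.2 b1.1.symm) hD _ _ b1.2.2 b2.2.2
  have h2 : 2 / (N : ℝ) ≤ |Real.sin (ang k - ang l)| := sin_lower' N k l hkl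
  have hN : (N : ℝ) = 8 * n + 1 := by simp [N]
  have hNpos : (0 : ℝ) < N := by rw [hN]; positivity
  rw [div_le_iff₀ hNpos] at h2
  rw [← hN] at hρD
  have h3 : D * 2 ≤ D * (|Real.sin (ang k - ang l)| * N) := by gcongr
  have h4 : D * |Real.sin (ang k - ang l)| * N < 2 * ρ * N := by gcongr
  linarith

/-- Enumerate a finite set by decreasing projection onto `u`. -/
lemma exists_enum (n : ℕ) (A : Finset Pt) (hA : A.card = n) (u : Pt) :
    ∃ s : Fin n → Pt, Function.Injective s ∧ Set.range s = (A : Set Pt) ∧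
      ∀ i j, i < j → inner ℝ (s j) u ≤ inner ℝ (s i) u := by
  let e := (A.equivFinOfCardEq hA).symm
  let f : Fin n → ℝ := fun i => - inner ℝ (e i : Pt) u
  refine ⟨fun i => (e (Tuple.sort f i) : Pt), ?_, ?_, ?_⟩
  · exact Subtype.val_injective.comp (e.injective.comp (Tuple.sort f).injective)
  · ext x
    constructor
    · rintro ⟨i, rfl⟩
      exact (e _).2
    · intro hx
      refine ⟨(Tuple.sort f).symm (e.symm ⟨x, hx⟩), by simp⟩
  · intro i j hij
    have := Tuple.monotone_sort f hij.le
    simp only [f, Function.comp] at this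
    linarith

/-- For valid configurations `S` and `T` of `n ≥ 1` points, contained in closed
balls of radii `rS`, `rT` around the origin, there is a translation `v` of length
at most `(rS + rT + 2)·(1 + 8n)` making the unlabeled problem from `S` to `T + v`
feasible. -/
theorem stmt1 (n : ℕ) (hn : 1 ≤ n) (S T : Finset Pt) (rS rT : ℝ)
    (hrS : 0 ≤ rS) (hrT : 0 ≤ rT)
    (hSn : S.card = n) (hTn : T.card = n)
    (hS : ∀ p ∈ S, ∀ q ∈ S, p ≠ q → 2 ≤ dist p q)
    (hT : ∀ p ∈ T, ∀ q ∈ T, p ≠ q → 2 ≤ dist p q)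
    (hSb : (S : Set Pt) ⊆ closedBall 0 rS)
    (hTb : (T : Set Pt) ⊆ closedBall 0 rT) :
    ∃ v : Pt, ‖v‖ ≤ (rS + rT + 2) * (1 + 8 * n) ∧
      Feasible n (S : Set Pt) ((fun p => p + v) '' (T : Set Pt)) := by
  have hn0 : (1 : ℝ) ≤ n := by exact_mod_cast hn
  set D : ℝ := (rS + rT + 2) * (1 + 8 * n) with hDdef
  have hD : 0 < D := by positivity
  obtain ⟨θ, gS, gT⟩ := exists_dir n S T hSn hTn hS hT D (rS + rT) hD (by rw [hDdef]; nlinarith)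
  have h9 : 9 * (rS + rT) ≤ D := by rw [hDdef]; nlinarith
  have hu := norm_dirv θ
  obtain ⟨s, sinj, srange, ssort⟩ := exists_enum n S hSn (dirv θ)
  obtain ⟨t, tinj, trange, tsort⟩ := exists_enum n T hTn (dirv θ)
  have hs : ∀ i, s i ∈ S := fun i => by
    have : s i ∈ (S : Set Pt) := srange ▸ Set.mem_range_self i
    exact this
  have ht : ∀ i, t i ∈ T := fun i => by
    have : t i ∈ (T : Set Pt) := trange ▸ Set.mem_range_self i
    exact this
  have good : ∀ A : Finset Pt, (∀ p ∈ A, ∀ q ∈ A, p ≠ q → 2 ≤ dist p q) →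
      (¬ ∃ p ∈ A, ∃ q ∈ A, BadPair D (rS + rT) θ p q) →
      ∀ p ∈ A, ∀ q ∈ A, p ≠ q → inner ℝ q (dirv θ) ≤ inner ℝ p (dirv θ) →
      ∀ z : Pt, ‖z‖ ≤ rS + rT → ∀ a : ℝ, 0 ≤ a →
      2 ≤ ‖(p - q) + a • (D • dirv θ + z)‖ := by
    intro A hA gA p hp q hq hpq hle z hz a ha
    have h0 : 0 ≤ inner ℝ (p - q) (dirv θ) := by rw [inner_sub_left]; linarith
    refine key_ineq (p - q) (dirv θ) z D (rS + rT) a hu (by positivity) h9 ha ?_ h0 hz ?_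
    · rw [← dist_eq_norm]; exact hA p hp q hq hpq
    · intro h4
      by_contra hlt
      push Not at hlt
      refine gA ⟨q, hq, p, hp, hpq.symm, h4, ?_⟩
      rwa [abs_of_nonneg h0]
  refine ⟨D • dirv θ, ?_, s, fun i => t i + D • dirv θ, sinj, ?_, srange, ?_, ?_⟩
  · rw [norm_smul, hu, mul_one, Real.norm_eq_abs, abs_of_pos hD]
  · intro i j h
    exact tinj (add_right_cancel h)
  · rw [← trange, ← Set.range_comp]; rfl
  · intro i x hx
    have hz : ‖t i - s i‖ ≤ rS + rT := by
      have h1 : ‖s i‖ ≤ rS := by simpa using hSb (hs i)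
      have h2 : ‖t i‖ ≤ rT := by simpa using hTb (ht i)
      have := norm_sub_le (t i) (s i)
      linarith
    obtain ⟨b, a, hb, ha, hab, rfl⟩ := hx
    obtain rfl : b = 1 - a := by linarith
    constructor
    · intro j hij
      have := good S hS gS (s i) (hs i) (s j) (hs j) (sinj.ne hij.ne) (ssort i j hij)
        (t i - s i) hz a ha
      rw [dist_eq_norm]
      refine this.trans_eq (congrArg norm ?_)
      module
    · intro j hij
      have := good T hT gT (t j) (ht j) (t i) (ht i) (tinj.ne hij.ne) (tsort j i hij)
        (t i - s i) hz (1 - a) hb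
      rw [dist_eq_norm, norm_sub_rev]
      refine this.trans_eq (congrArg norm ?_)
      module
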